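/- Let n ≥ 1 and let γ : [0,1] → ℝ^{n+1} be a smooth curve with γ(t) ≠ 0 for all t ∈ [0,1]. Then γ is locally convex if and only if the curve t ↦ γ(t)/‖γ(t)‖, taking values in the unit sphere S^n, is locally convex. -/

import Mathlib

open Set

/-- Determinant of the `m×m` matrix whose `j`-th column is the `j`-th derivative of the
curve `γ : ℝ → ℝ^m` at `t`. -/
noncomputable def detCurve (m : ℕ) (γ : ℝ → Fin m → ℝ) (t : ℝ) : ℝ :=
  (Matrix.of fun i j : Fin m => iteratedDeriv (j : ℕ) γ t i).det

lemma detCurve_smul (m : ℕ) (γ : ℝ → Fin m → ℝ) (f : ℝ → ℝ) (t : ℝ)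
    (hγ : ContDiffAt ℝ (⊤ : ℕ∞) γ t) (hf : ContDiffAt ℝ (⊤ : ℕ∞) f t) :
    detCurve m (fun s => f s • γ s) t = detCurve m γ t * f t ^ m := by
  unfold detCurve
  set U : Matrix (Fin m) (Fin m) ℝ := Matrix.of fun k j =>
    ((j : ℕ).choose k : ℝ) * iteratedDeriv ((j : ℕ) - k) f t with hU
  have hdet : U.det = f t ^ m := by
    rw [Matrix.det_of_isUpperTriangular]
    · simp [hU]
    · intro i j hij
      have : (j : ℕ) < i := hij
      simp [hU, Nat.choose_eq_zero_of_lt this]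
  rw [← hdet, ← Matrix.det_mul]
  congr 1
  ext i j
  have h1 : iteratedDeriv (j : ℕ) (fun s => f s • γ s) t =
      ∑ k ∈ Finset.range ((j : ℕ) + 1),
        ((j : ℕ).choose k) • (iteratedDeriv ((j : ℕ) - k) f t • iteratedDeriv k γ t) := by
    have hfj : ContDiffAt ℝ (j : ℕ) f t := hf.of_le (by exact_mod_cast le_top)
    have hgj : ContDiffAt ℝ (j : ℕ) γ t := hγ.of_le (by exact_mod_cast le_top)
    have := iteratedDerivWithin_smul (mem_univ t) uniqueDiffOn_univ
      hfj.contDiffWithinAt hgj.contDiffWithinAt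
    simp only [iteratedDerivWithin_univ] at this
    change iteratedDeriv (j : ℕ) (f • γ) t = _
    rw [this, ← Finset.sum_range_reflect]
    refine Finset.sum_congr rfl fun k hk => ?_
    have hk' : k ≤ (j : ℕ) := by simpa [Nat.lt_succ_iff] using hk
    have e : (j : ℕ) + 1 - 1 - k = j - k := by omega
    rw [e, Nat.choose_symm hk', Nat.sub_sub_self hk']
  rw [Matrix.of_apply, h1, Matrix.mul_apply]
  simp only [hU, Matrix.of_apply, Finset.sum_apply, Pi.smul_apply, smul_eq_mul, nsmul_eq_mul]
  rw [Fin.sum_univ_eq_sum_range (fun k => iteratedDeriv k γ t i *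
    (((j : ℕ).choose k : ℝ) * iteratedDeriv ((j : ℕ) - k) f t)) m]
  rw [← Finset.sum_subset (Finset.range_subset_range.2 (Nat.succ_le_of_lt j.2))]
  · exact Finset.sum_congr rfl fun k _ => by simp; ring
  · intro k _ hk
    have : (j : ℕ) < k := by simpa [Nat.lt_succ_iff] using hk
    simp [Nat.choose_eq_zero_of_lt this]

/-- A nowhere vanishing curve is locally convex iff its radial projection to the unit
sphere `Sⁿ` is locally convex. -/
theorem locally_convex_iff_normalized (n : ℕ) (hn : 1 ≤ n)
    (γ : ℝ → Fin (n+1) → ℝ)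
    (hγ : ContDiff ℝ (⊤ : ℕ∞) γ)
    (hne : ∀ t ∈ Icc (0 : ℝ) 1, γ t ≠ 0) :
    (∀ t ∈ Icc (0 : ℝ) 1, detCurve (n+1) γ t ≠ 0) ↔
      ∀ t ∈ Icc (0 : ℝ) 1,
        detCurve (n+1) (fun s x => γ s x / Real.sqrt (∑ y, γ s y ^ 2)) t ≠ 0 := by
  refine forall₂_congr fun t ht => ?_
  have hpos : 0 < ∑ y, γ t y ^ 2 := by
    obtain ⟨y, hy⟩ := Function.ne_iff.1 (hne t ht)
    exact Finset.sum_pos' (fun _ _ => sq_nonneg _) ⟨y, Finset.mem_univ _, sq_pos_of_ne_zero hy⟩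
  have hsum : ContDiff ℝ (⊤ : ℕ∞) (fun s => ∑ y, γ s y ^ 2) :=
    ContDiff.sum fun y _ => ((contDiff_pi.1 hγ) y).pow 2
  have hs : 0 < Real.sqrt (∑ y, γ t y ^ 2) := Real.sqrt_pos.2 hpos
  have hf : ContDiffAt ℝ (⊤ : ℕ∞) (fun s => (Real.sqrt (∑ y, γ s y ^ 2))⁻¹) t :=
    (hsum.contDiffAt.sqrt hpos.ne').inv hs.ne'
  have key := detCurve_smul (n+1) γ _ t hγ.contDiffAt hf
  have e : (fun s x => γ s x / Real.sqrt (∑ y, γ s y ^ 2)) =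
      fun s => (Real.sqrt (∑ y, γ s y ^ 2))⁻¹ • γ s := by
    ext s x
    simp [div_eq_inv_mul]
  rw [e, key]
  have : ((Real.sqrt (∑ y, γ t y ^ 2))⁻¹) ^ (n+1) ≠ 0 := pow_ne_zero _ (inv_ne_zero hs.ne')
  simp only [ne_eq, mul_eq_zero, this, or_false]
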